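/- arXiv:2003.04703 — 2 statements merged into one kernel-verified Lean document; each statement's English description precedes it below -/
import Mathlib

section
/- For an n×n matrix B over the extended reals ℝ̄ and a vector x ∈ ℝ̄^n, the fixpoint condition x = B* ⊗ x (max-plus) holds if and only if the dual fixpoint condition x = (B^♯)_* ⊗' x (min-plus) holds. -/
/-!
Both fixpoint conditions say that `x` is a subsolution of `B`, i.e. `B i j + x j ≤ x i` for all
`i`, `j`.

For the max-plus side this is `eq_mpStar_iff`: since `B* ≥ E` and `B* ≥ B`, a fixed point is a
subsolution, and conversely the subsolution inequality iterates to every power of `B` and passes to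
the supremum. Suprema are moved through `+` with the residuation `a + b ≤ c ↔ a ≤ -(-c + b)`, which
holds on all of `EReal`, so infinite entries need no separate treatment.

For the min-plus side, negation identifies `(B^♯)_* ⊗' x` with `-((Bᵀ)* ⊗ (-x))`
(`mnMulVec_mnStar_conjM`), so `x` is fixed exactly when `-x` is a subsolution of `Bᵀ`. By
residuation, `B i j + x j ≤ x i` and `B i j + (-x i) ≤ -x j` are equivalent.
-/

noncomputable section

/-- Max-plus matrix product over the extended reals (`-∞` is absorbing for `+` in `EReal`). -/
def mpMul {m n p : ℕ} (A : Matrix (Fin m) (Fin n) EReal) (B : Matrix (Fin n) (Fin p) EReal) :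
    Matrix (Fin m) (Fin p) EReal :=
  fun i j => ⨆ k, A i k + B k j

/-- Max-plus matrix-vector product. -/
def mpMulVec {m n : ℕ} (A : Matrix (Fin m) (Fin n) EReal) (x : Fin n → EReal) :
    Fin m → EReal :=
  fun i => ⨆ k, A i k + x k

/-- Min-plus addition on `EReal`: `+∞` is absorbing. -/
def mnAdd (a b : EReal) : EReal := -((-a) + (-b))

/-- Min-plus matrix product. -/
def mnMul {m n p : ℕ} (A : Matrix (Fin m) (Fin n) EReal) (B : Matrix (Fin n) (Fin p) EReal) :
    Matrix (Fin m) (Fin p) EReal :=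
  fun i j => ⨅ k, mnAdd (A i k) (B k j)

/-- Min-plus matrix-vector product. -/
def mnMulVec {m n : ℕ} (A : Matrix (Fin m) (Fin n) EReal) (x : Fin n → EReal) :
    Fin m → EReal :=
  fun i => ⨅ k, mnAdd (A i k) (x k)

/-- Conjugate matrix: `(conj A) i j = -(A j i)`. -/
def conjM {m n : ℕ} (A : Matrix (Fin m) (Fin n) EReal) : Matrix (Fin n) (Fin m) EReal :=
  fun i j => -(A j i)

/-- Max-plus identity matrix. -/
def mpId (n : ℕ) : Matrix (Fin n) (Fin n) EReal :=
  fun i j => if i = j then 0 else ⊥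

/-- Min-plus identity matrix. -/
def mnId (n : ℕ) : Matrix (Fin n) (Fin n) EReal :=
  fun i j => if i = j then 0 else ⊤

/-- Max-plus matrix powers. -/
def mpPow {n : ℕ} (A : Matrix (Fin n) (Fin n) EReal) : ℕ → Matrix (Fin n) (Fin n) EReal
  | 0 => mpId n
  | k + 1 => mpMul A (mpPow A k)

/-- Min-plus matrix powers. -/
def mnPow {n : ℕ} (A : Matrix (Fin n) (Fin n) EReal) : ℕ → Matrix (Fin n) (Fin n) EReal
  | 0 => mnId n
  | k + 1 => mnMul A (mnPow A k)

/-- Max-plus Kleene star: entrywise supremum of all max-plus powers. -/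
def mpStar {n : ℕ} (A : Matrix (Fin n) (Fin n) EReal) : Matrix (Fin n) (Fin n) EReal :=
  fun i j => ⨆ k, mpPow A k i j

/-- Min-plus star: entrywise infimum of all min-plus powers. -/
def mnStar {n : ℕ} (A : Matrix (Fin n) (Fin n) EReal) : Matrix (Fin n) (Fin n) EReal :=
  fun i j => ⨅ k, mnPow A k i j

/-- Entrywise maximum of two matrices (`A ⊕ B`). -/
def mSup {m n : ℕ} (A B : Matrix (Fin m) (Fin n) EReal) : Matrix (Fin m) (Fin n) EReal :=
  fun i j => A i j ⊔ B i j

/-- Residuation: `a ↦ a + b` has upper adjoint `c ↦ mnAdd c (-b)`, for all infinite values too. -/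
lemma add_le_iff_le_neg_add (a b c : EReal) : a + b ≤ c ↔ a ≤ -(-c + b) := by
  induction b with
  | bot => simp
  | top =>
    by_cases hc : c = ⊤
    · simp [hc]
    · have h : -c + ⊤ = ⊤ := EReal.add_top_of_ne_bot (by simpa using hc)
      rw [h, EReal.neg_top, le_bot_iff]
      constructor
      · intro h'
        by_contra ha
        rw [EReal.add_top_of_ne_bot ha, top_le_iff] at h'
        exact hc h'
      · rintro rfl
        simp
  | coe b =>
    rw [EReal.neg_add (Or.inr (EReal.coe_ne_top b)) (Or.inr (EReal.coe_ne_bot b)), neg_neg]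
    exact (EReal.le_sub_iff_add_le (Or.inl (EReal.coe_ne_bot b))
      (Or.inl (EReal.coe_ne_top b))).symm

lemma iSup_add_le_iff {ι : Sort*} (f : ι → EReal) (b c : EReal) :
    (⨆ i, f i) + b ≤ c ↔ ∀ i, f i + b ≤ c := by
  simp only [add_le_iff_le_neg_add, iSup_le_iff]

lemma mpPow_add_le {n : ℕ} {B : Matrix (Fin n) (Fin n) EReal} {x : Fin n → EReal}
    (h : ∀ i j, B i j + x j ≤ x i) (k : ℕ) (i j : Fin n) : mpPow B k i j + x j ≤ x i := by
  induction k generalizing i with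
  | zero =>
    by_cases hij : i = j
    · simp [mpPow, mpId, hij]
    · simp [mpPow, mpId, hij]
  | succ k ih =>
    refine (iSup_add_le_iff _ _ _).2 fun l => ?_
    rw [add_assoc]
    exact (add_le_add le_rfl (ih l)).trans (h i l)

lemma mpPow_le_mpStar {n : ℕ} (B : Matrix (Fin n) (Fin n) EReal) (k : ℕ) (i j : Fin n) :
    mpPow B k i j ≤ mpStar B i j :=
  le_iSup (fun k => mpPow B k i j) k

lemma le_mpStar {n : ℕ} (B : Matrix (Fin n) (Fin n) EReal) (i j : Fin n) :
    B i j ≤ mpStar B i j := by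
  refine le_trans ?_ (mpPow_le_mpStar B 1 i j)
  refine le_trans ?_ (le_iSup (fun l => B i l + mpId n l j) j)
  simp [mpId]

/-- Being fixed by `B*` is the same as being a subsolution `B ⊗ x ≤ x`. -/
lemma eq_mpStar_iff {n : ℕ} (B : Matrix (Fin n) (Fin n) EReal) (x : Fin n → EReal) :
    x = mpMulVec (mpStar B) x ↔ ∀ i j, B i j + x j ≤ x i := by
  constructor
  · intro h i j
    refine (add_le_add (le_mpStar B i j) le_rfl).trans ?_
    conv_rhs => rw [h]
    exact le_iSup (fun k => mpStar B i k + x k) j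
  · intro h
    funext i
    apply le_antisymm
    · refine le_trans ?_ (le_iSup (fun k => mpStar B i k + x k) i)
      have h0 : (0 : EReal) ≤ mpStar B i i := by
        simpa [mpPow, mpId] using mpPow_le_mpStar B 0 i i
      simpa using add_le_add h0 (le_refl (x i))
    · exact iSup_le fun j => (iSup_add_le_iff _ _ _).2 fun k => mpPow_add_le h k i j

lemma EReal_neg_iSup {ι : Sort*} (f : ι → EReal) : -(⨆ i, f i) = ⨅ i, -f i :=
  EReal.negOrderIso.map_iSup f

lemma mnPow_conjM {n : ℕ} (B : Matrix (Fin n) (Fin n) EReal) (k : ℕ) (i j : Fin n) :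
    mnPow (conjM B) k i j = -mpPow B.transpose k i j := by
  induction k generalizing i with
  | zero =>
    by_cases hij : i = j
    · simp [mnPow, mpPow, mnId, mpId, hij]
    · simp [mnPow, mpPow, mnId, mpId, hij]
  | succ k ih =>
    simp only [mnPow, mpPow, mnMul, mpMul, mnAdd, EReal_neg_iSup, ih, neg_neg, conjM,
      Matrix.transpose_apply]

/-- Negation turns the min-plus action of `(B^♯)_*` into the max-plus action of `(Bᵀ)*`. -/
lemma mnMulVec_mnStar_conjM {n : ℕ} (B : Matrix (Fin n) (Fin n) EReal) (x : Fin n → EReal) :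
    mnMulVec (mnStar (conjM B)) x = -mpMulVec (mpStar B.transpose) (-x) := by
  funext i
  simp only [mnMulVec, mpMulVec, Pi.neg_apply, EReal_neg_iSup, mnAdd, mnStar, mpStar,
    mnPow_conjM]
  simp only [← EReal_neg_iSup, neg_neg]

/-- `x = B* ⊗ x ↔ x = (B^♯)_* ⊗' x`. -/
theorem star_fix_iff_dual {n : ℕ} (B : Matrix (Fin n) (Fin n) EReal)
    (x : Fin n → EReal) :
    x = mpMulVec (mpStar B) x ↔ x = mnMulVec (mnStar (conjM B)) x := by
  rw [mnMulVec_mnStar_conjM, ← neg_eq_iff_eq_neg, eq_mpStar_iff, eq_mpStar_iff, forall_comm]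
  refine forall₂_congr fun j i => ?_
  -- both sides bound `B i j`, by residuation with respect to `x j` and to `-x i`
  rw [add_le_iff_le_neg_add, add_le_iff_le_neg_add, Matrix.transpose_apply, Pi.neg_apply,
    Pi.neg_apply, neg_neg, add_comm]
end
end

section
/- (Fastest 1-periodic trajectory.) Let 𝒜 and ℬ be n×n matrices over the extended reals ℝ̄, let λ be a real number, and let x(0) ∈ ℝ̄^n be an eigenvector of 𝒜, i.e. 𝒜 ⊗ x(0) = λ + x(0) (entrywise). Then the trajectory x(k) = 𝒜^k ⊗ x(0) satisfies the upper-bound constraints x(k) ≤ ℬ ⊗' x(k-1) for all k ≥ 1 if and only if (ℬ^♯ ⊗ 𝒜)* ⊗ x(0) = x(0) (i.e. x(0) lies in the image of (ℬ^♯ ⊗ 𝒜)*). -/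
/-!
Max-plus addition by a fixed `b` is residuated: `b + a ≤ x ↔ a ≤ mnAdd (-b) x`, for all extended
reals, the two absorbing conventions being exactly what makes this hold at `±∞`
(`add_le_iff_le_mnAdd`). Two things follow. First, `b + ·` commutes with suprema, hence
max-plus matrix-vector multiplication is associative and commutes with real shifts. Second,
`y ≤ ℬ ⊗' x ↔ ℬ^♯ ⊗ y ≤ x`.

Each `x(k)` is a real shift `c + x(0)`, so all the constraints reduce to the one at `k = 1`, which
reads `(ℬ^♯ ⊗ 𝒜) ⊗ x(0) ≤ x(0)`. For any square `C`, the inequality `C ⊗ x ≤ x` iterates to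
`C^k ⊗ x ≤ x`, and is therefore equivalent to `C* ⊗ x = x`.
-/

noncomputable section

/-- Residuation of max-plus addition, with no finiteness assumptions. -/
theorem add_le_iff_le_mnAdd (b a x : EReal) : b + a ≤ x ↔ a ≤ mnAdd (-b) x := by
  unfold mnAdd
  induction b with
  | bot => simp
  | top =>
    induction a with
    | bot => simp
    | top => induction x <;> simp
    | coe a =>
      induction x with
      | bot => simp
      | top => simp
      | coe x => simp [← EReal.coe_neg]
  | coe b =>
    induction a with
    | bot => simp
    | top => induction x <;> simp [← EReal.coe_neg, ← EReal.coe_add]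
    | coe a =>
      induction x with
      | bot => simp [← EReal.coe_add]
      | top => simp [← EReal.coe_neg]
      | coe x =>
        rw [neg_neg]
        norm_cast
        constructor <;> intro h <;> linarith

theorem add_iSup_ereal {ι : Sort*} (b : EReal) (f : ι → EReal) :
    b + ⨆ k, f k = ⨆ k, b + f k :=
  GaloisConnection.l_iSup (l := fun a => b + a) (u := fun x => mnAdd (-b) x)
    (fun a x => add_le_iff_le_mnAdd b a x)

theorem iSup_add_ereal {ι : Sort*} (b : EReal) (f : ι → EReal) :
    (⨆ k, f k) + b = ⨆ k, f k + b := by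
  rw [add_comm, add_iSup_ereal]
  simp_rw [add_comm b]

theorem mpMulVec_mpMul {m n p : ℕ} (A : Matrix (Fin m) (Fin n) EReal)
    (B : Matrix (Fin n) (Fin p) EReal) (x : Fin p → EReal) :
    mpMulVec (mpMul A B) x = mpMulVec A (mpMulVec B x) := by
  funext i
  simp only [mpMulVec, mpMul, iSup_add_ereal, add_iSup_ereal, add_assoc]
  exact iSup_comm

theorem mpMulVec_mpId {n : ℕ} (x : Fin n → EReal) : mpMulVec (mpId n) x = x := by
  funext i
  apply le_antisymm
  · refine iSup_le fun k => ?_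
    by_cases h : i = k
    · simp [mpId, h]
    · simp [mpId, h]
  · refine le_trans ?_ (le_iSup _ i)
    simp [mpId]

theorem mpMulVec_mono {m n : ℕ} (A : Matrix (Fin m) (Fin n) EReal) {x y : Fin n → EReal}
    (h : x ≤ y) : mpMulVec A x ≤ mpMulVec A y :=
  fun _ => iSup_mono fun k => add_le_add le_rfl (h k)

theorem mpMulVec_shift {m n : ℕ} (A : Matrix (Fin m) (Fin n) EReal) (c : EReal)
    (x : Fin n → EReal) :
    mpMulVec A (fun i => c + x i) = fun i => c + mpMulVec A x i := by
  funext i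
  simp only [mpMulVec, add_iSup_ereal, add_left_comm]

theorem le_mnMulVec_iff {m n : ℕ} (B : Matrix (Fin m) (Fin n) EReal) (y : Fin m → EReal)
    (x : Fin n → EReal) : y ≤ mnMulVec B x ↔ mpMulVec (conjM B) y ≤ x := by
  simp only [Pi.le_def, mnMulVec, mpMulVec, conjM, le_iInf_iff, iSup_le_iff,
    add_le_iff_le_mnAdd, neg_neg]
  exact forall_comm

theorem mpMulVec_mpStar {n : ℕ} (C : Matrix (Fin n) (Fin n) EReal) (x : Fin n → EReal)
    (i : Fin n) : mpMulVec (mpStar C) x i = ⨆ k, mpMulVec (mpPow C k) x i := by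
  simp only [mpMulVec, mpStar, iSup_add_ereal]
  exact iSup_comm

theorem mpMulVec_mpStar_eq_iff {n : ℕ} (C : Matrix (Fin n) (Fin n) EReal) (x : Fin n → EReal) :
    mpMulVec (mpStar C) x = x ↔ mpMulVec C x ≤ x := by
  constructor
  · intro h i
    conv_rhs => rw [← h, mpMulVec_mpStar]
    refine le_trans ?_ (le_iSup _ 1)
    simp [mpPow, mpMulVec_mpMul, mpMulVec_mpId]
  · intro h
    have hk : ∀ k, mpMulVec (mpPow C k) x ≤ x := by
      intro k
      induction k with
      | zero => exact (mpMulVec_mpId x).le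
      | succ k ih =>
        rw [mpPow, mpMulVec_mpMul]
        exact (mpMulVec_mono C ih).trans h
    funext i
    rw [mpMulVec_mpStar]
    refine le_antisymm (iSup_le fun k => hk k i) ?_
    refine le_trans ?_ (le_iSup _ 0)
    simp [mpPow, mpMulVec_mpId]

/-- A trajectory starting at an eigenvector stays among the real shifts of that eigenvector. -/
theorem exists_shift_of_eigenvector {n : ℕ} (A : Matrix (Fin n) (Fin n) EReal) (lam : ℝ)
    (x : Fin n → EReal) (heig : mpMulVec A x = fun i => (lam : EReal) + x i) (k : ℕ) :
    ∃ c : ℝ, mpMulVec (mpPow A k) x = fun i => (c : EReal) + x i := by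
  induction k with
  | zero => exact ⟨0, by simp [mpPow, mpMulVec_mpId]⟩
  | succ k ih =>
    obtain ⟨c, hc⟩ := ih
    refine ⟨c + lam, ?_⟩
    rw [mpPow, mpMulVec_mpMul, hc, mpMulVec_shift, heig]
    funext i
    rw [EReal.coe_add, add_assoc]

/-- fastest 1-periodic trajectory. -/
theorem fastest_one_periodic {n : ℕ} (𝒜 ℬ : Matrix (Fin n) (Fin n) EReal)
    (lam : ℝ) (x0 : Fin n → EReal)
    (heig : mpMulVec 𝒜 x0 = fun i => (lam : EReal) + x0 i) :
    (∀ k : ℕ, 1 ≤ k →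
        mpMulVec (mpPow 𝒜 k) x0 ≤ mnMulVec ℬ (mpMulVec (mpPow 𝒜 (k - 1)) x0)) ↔
      mpMulVec (mpStar (mpMul (conjM ℬ) 𝒜)) x0 = x0 := by
  rw [mpMulVec_mpStar_eq_iff, mpMulVec_mpMul]
  constructor
  · intro h
    have h1 := h 1 le_rfl
    rw [le_mnMulVec_iff] at h1
    simpa [mpPow, mpMulVec_mpMul, mpMulVec_mpId] using h1
  · intro h k hk
    obtain ⟨k, rfl⟩ := Nat.exists_eq_add_of_le' hk
    obtain ⟨c, hc⟩ := exists_shift_of_eigenvector 𝒜 lam x0 heig k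
    rw [Nat.add_sub_cancel, mpPow, mpMulVec_mpMul, hc, le_mnMulVec_iff, mpMulVec_shift,
      mpMulVec_shift]
    exact fun i => add_le_add le_rfl (h i)
end
end
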